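/- For t ≥ 2, a (t,n)-family F satisfies N(F) = U(t,n) if and only if, up to relabeling of elements, F equals the family F* with A_i* = {i} ∪ {n+1,...,n+t}; equivalently, N(F) = U(t,n) iff |A_i| = t+1 for all i and |A_i ∩ A_j| = t for all i ≠ j. -/

import Mathlib

open Finset

/-- Number of SDRs of the family `A`. -/
def numSDR {n : ℕ} (A : Fin n → Finset ℕ) : ℕ :=
  ((Fintype.piFinset A).filter Function.Injective).card

/-- `(t,n)`-family: every nonempty union of `k` sets has at least `k + t` elements. -/
def IsTNFamily (t : ℕ) {n : ℕ} (A : Fin n → Finset ℕ) : Prop :=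
  ∀ I : Finset (Fin n), I.Nonempty → I.card + t ≤ (I.biUnion A).card

/-- Valued `(t,n)`-family with valuation `a`. -/
def IsValuedTN (t : ℕ) {n : ℕ} (a : Fin n → ℕ) (A : Fin n → Finset ℕ) : Prop :=
  (∀ i, 0 < a i) ∧ (∀ i, (A i).card = a i + t) ∧
    ∀ I : Finset (Fin n), 2 ≤ I.card → (∑ i ∈ I, a i) + t ≤ (I.biUnion A).card

/-- `I_x = {i : x ∈ A_i}`. -/
def Ix {n : ℕ} (A : Fin n → Finset ℕ) (x : ℕ) : Finset (Fin n) :=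
  Finset.univ.filter fun i => x ∈ A i

/-- `{x,y}` is exclusive. -/
def Exclusive {n : ℕ} (A : Fin n → Finset ℕ) (x y : ℕ) : Prop :=
  (Ix A x \ Ix A y).Nonempty ∧ (Ix A y \ Ix A x).Nonempty

/-- `{x,y}` is saturated. -/
def Saturated (t : ℕ) {n : ℕ} (a : Fin n → ℕ) (A : Fin n → Finset ℕ) (x y : ℕ) : Prop :=
  ∃ I : Finset (Fin n),
    I ∩ Ix A x ∩ Ix A y = ∅ ∧ (I ∩ (Ix A x \ Ix A y)).Nonempty ∧
    (I ∩ (Ix A y \ Ix A x)).Nonempty ∧ (I.biUnion A).card = (∑ i ∈ I, a i) + t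

/-- The modified family `F_y^x`: replace `x` by `y` in each `A_i` with `i ∈ I_x ∩ I_y^c`. -/
def swapFam {n : ℕ} (A : Fin n → Finset ℕ) (x y : ℕ) : Fin n → Finset ℕ :=
  fun i => if x ∈ A i ∧ y ∉ A i then insert y (A i \ {x}) else A i

def U (t n : ℕ) : ℕ := ∑ j ∈ Finset.range (t + 1), t.choose j * n.choose j * j.factorial

/-- The extremal family `F*`: `A_i* = {i} ∪ {n+1, …, n+t}` (index `i : Fin n` stands for `i+1`). -/
def Astar (t n : ℕ) : Fin n → Finset ℕ := fun i => insert ((i : ℕ) + 1) (Finset.Ioc n (n + t))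

/-- `∑_{i < j} a_i a_j`. -/
def pairSum {n : ℕ} (a : Fin n → ℕ) : ℕ :=
  ∑ p ∈ Finset.univ.filter (fun p : Fin n × Fin n => p.1 < p.2), a p.1 * a p.2

/-- Elementary symmetric polynomial `e_k(a_1,…,a_n)`. -/
def esymm {n : ℕ} (a : Fin n → ℕ) (k : ℕ) : ℕ :=
  ∑ S ∈ Finset.univ.powersetCard k, ∏ i ∈ S, a i

/-!
Call a set of indices `I` tight when its union has exactly `#I + t` elements. If a family minimises
the number of SDRs, no shift `x ↦ y` of an exclusive pair `{x, y}` preserves the surplus condition,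
because such a shift strictly loses SDRs; hence every exclusive pair is covered by a tight set of
indices no member of which contains both elements. A submodularity count over these tight sets
shows that an element of maximal degree must then lie in every set. Applied to what remains after
removing all common elements, this shows that there are at least `t` of them, and minimality
together with Hall's theorem leaves exactly one private element in each set. An SDR of such a family
amounts to an injection of a set of indices into the `t` common elements.
-/

section GeneralFamilies

variable {ι α : Type*} {t : ℕ} {A : ι → Finset α}

/-- Exclusive pairs, for arbitrary index and element types: each element occurs in some set of
the family without the other. -/
def IsExclusivePair (A : ι → Finset α) (x y : α) : Prop :=
  (∃ p, x ∈ A p ∧ y ∉ A p) ∧ ∃ q, y ∈ A q ∧ x ∉ A q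

theorem IsExclusivePair.ne {x y : α} (hxy : IsExclusivePair A x y) : x ≠ y := by
  obtain ⟨⟨p, hx, hy⟩, -⟩ := hxy
  exact fun h => hy (h ▸ hx)

variable [DecidableEq α]

/-- The defining condition of a `(t,n)`-family, for arbitrary index and element types. -/
def HasSurplus (t : ℕ) (A : ι → Finset α) : Prop :=
  ∀ I : Finset ι, I.Nonempty → #I + t ≤ #(I.biUnion A)

/-- A set of indices at which the surplus condition holds with equality. -/
def IsTight (t : ℕ) (A : ι → Finset α) (I : Finset ι) : Prop :=
  #(I.biUnion A) = #I + t

section Tight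

/-! ### Tight sets of indices -/

variable [DecidableEq ι]

theorem biUnion_inter_subset_inter_biUnion (A : ι → Finset α) (I J : Finset ι) :
    (I ∩ J).biUnion A ⊆ I.biUnion A ∩ J.biUnion A :=
  subset_inter (biUnion_subset_biUnion_of_subset_left A inter_subset_left)
    (biUnion_subset_biUnion_of_subset_left A inter_subset_right)

theorem HasSurplus.card_inter_biUnion_le_of_isTight (hA : HasSurplus t A) {I J : Finset ι}
    (hI : IsTight t A I) (hJ : IsTight t A J) (hIJ : (I ∩ J).Nonempty) :
    #(I.biUnion A ∩ J.biUnion A) ≤ #(I ∩ J) + t := by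
  have hunion := hA (I ∪ J) (hIJ.mono (inter_subset_left.trans subset_union_left))
  rw [union_biUnion] at hunion
  have hindex := card_union_add_card_inter I J
  have helem := card_union_add_card_inter (I.biUnion A) (J.biUnion A)
  unfold IsTight at hI hJ
  omega

theorem IsTight.biUnion_inter {I J : Finset ι} (hI : IsTight t A I) (hJ : IsTight t A J)
    (hA : HasSurplus t A) (hIJ : (I ∩ J).Nonempty) :
    (I ∩ J).biUnion A = I.biUnion A ∩ J.biUnion A :=
  eq_of_subset_of_card_le (biUnion_inter_subset_inter_biUnion A I J)
    ((hA.card_inter_biUnion_le_of_isTight hI hJ hIJ).trans (hA _ hIJ))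

theorem IsTight.inter {I J : Finset ι} (hI : IsTight t A I) (hJ : IsTight t A J)
    (hA : HasSurplus t A) (hIJ : (I ∩ J).Nonempty) : IsTight t A (I ∩ J) := by
  refine le_antisymm ?_ (hA _ hIJ)
  rw [hI.biUnion_inter hJ hA hIJ]
  exact hA.card_inter_biUnion_le_of_isTight hI hJ hIJ

theorem IsTight.card_biUnion_sdiff_le {I W : Finset ι} (hI : IsTight t A I)
    (hA : HasSurplus t A) (hIW : (I ∩ W).Nonempty) :
    #(I.biUnion A \ (I ∩ W).biUnion A) ≤ #(I \ W) := by
  have hinter := hA _ hIW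
  have hindex := card_inter_add_card_sdiff I W
  rw [card_sdiff_of_subset (biUnion_subset_biUnion_of_subset_left A inter_subset_left), hI]
  omega

theorem biUnion_sdiff_sdiff_subset (A : ι → Finset α) (I T : Finset ι) (s : Finset (Finset ι))
    (hinter : ∀ J ∈ s, (J ∩ I).Nonempty → J ∩ I ∈ s) :
    (I.biUnion A \ (I ∩ T).biUnion A) \ (s.biUnion fun J => J.biUnion A \ (J ∩ T).biUnion A) ⊆
      I.biUnion A \ (I ∩ (T ∪ s.biUnion id)).biUnion A := by
  intro y hy
  simp only [mem_sdiff] at hy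
  obtain ⟨⟨hyI, hyT⟩, hys⟩ := hy
  refine mem_sdiff.2 ⟨hyI, fun hyW => ?_⟩
  obtain ⟨i, hi, hyi⟩ := mem_biUnion.1 hyW
  obtain ⟨hiI, hiW⟩ := mem_inter.1 hi
  obtain ⟨J, hJ, hiJ⟩ : ∃ J ∈ s, i ∈ J := by
    rcases mem_union.1 hiW with hiT | his
    · exact absurd (mem_biUnion.2 ⟨i, mem_inter.2 ⟨hiI, hiT⟩, hyi⟩) hyT
    · simpa only [mem_biUnion, id] using his
  have hiJI : i ∈ J ∩ I := mem_inter.2 ⟨hiJ, hiI⟩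
  refine hys (mem_biUnion.2 ⟨J ∩ I, hinter J hJ ⟨i, hiJI⟩, mem_sdiff.2 ⟨?_, fun h => hyT ?_⟩⟩)
  · exact mem_biUnion.2 ⟨i, hiJI, hyi⟩
  · exact biUnion_subset_biUnion_of_subset_left A (inter_subset_inter_right inter_subset_right) h

/- Adding the tight sets in order of increasing size, the elements that a new tight set contributes
beyond the earlier ones are paid for by the indices it contributes: an element already covered by
an index shared with an earlier set `J` is counted for the smaller tight set `J ∩ I`. -/
theorem HasSurplus.card_biUnion_sdiff_le (hA : HasSurplus t A) (T : Finset ι)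
    (s : Finset (Finset ι)) (htight : ∀ J ∈ s, IsTight t A J)
    (hmeet : ∀ J ∈ s, (J ∩ T).Nonempty)
    (hinter : ∀ J ∈ s, ∀ J' ∈ s, (J ∩ J').Nonempty → J ∩ J' ∈ s) :
    #(s.biUnion fun J => J.biUnion A \ (J ∩ T).biUnion A) ≤ #(s.biUnion id \ T) := by
  induction s using Finset.induction_on_max_value (fun J : Finset ι => #J) with
  | empty => simp
  | insert I s hIs hmax ih =>
    have not_subset : ∀ J ∈ s, ¬ I ⊆ J := fun J hJ hIJ =>
      hIs (eq_of_subset_of_card_le hIJ (hmax J hJ) ▸ hJ)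
    have inter_mem : ∀ J ∈ s, ∀ J' ∈ insert I s, (J ∩ J').Nonempty → J ∩ J' ∈ s := by
      intro J hJ J' hJ' hne
      refine (mem_insert.1 (hinter J (mem_insert_of_mem hJ) J' hJ' hne)).resolve_left ?_
      exact fun h => not_subset J hJ (h ▸ inter_subset_left)
    specialize ih (fun J hJ => htight J (mem_insert_of_mem hJ))
      (fun J hJ => hmeet J (mem_insert_of_mem hJ))
      (fun J hJ J' hJ' => inter_mem J hJ J' (mem_insert_of_mem hJ'))
    set Y := s.biUnion fun J => J.biUnion A \ (J ∩ T).biUnion A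
    set W := T ∪ s.biUnion id
    have new_elements : #((I.biUnion A \ (I ∩ T).biUnion A) \ Y) ≤ #(I \ W) :=
      (card_le_card (biUnion_sdiff_sdiff_subset A I T s
        fun J hJ => inter_mem J hJ I (mem_insert_self I s))).trans
      ((htight I (mem_insert_self I s)).card_biUnion_sdiff_le hA
        ((hmeet I (mem_insert_self I s)).mono (inter_subset_inter_left subset_union_left)))
    calc #((insert I s).biUnion fun J => J.biUnion A \ (J ∩ T).biUnion A)
        = #(Y ∪ (I.biUnion A \ (I ∩ T).biUnion A) \ Y) := by
          rw [biUnion_insert, union_sdiff_self_eq_union, union_comm]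
      _ ≤ #Y + #((I.biUnion A \ (I ∩ T).biUnion A) \ Y) := card_union_le _ _
      _ ≤ #(s.biUnion id \ T) + #((I \ T) \ (s.biUnion id \ T)) := by
          rw [sdiff_sdiff_left (a := I), sup_eq_union, union_sdiff_self_eq_union]
          exact Nat.add_le_add ih new_elements
      _ = #((insert I s).biUnion id \ T) := by
          rw [add_comm, card_sdiff_add_card, biUnion_insert, id, union_sdiff_distrib]

end Tight

/-! ### Common elements -/

/-- Saturated pairs with all values equal to `1`: some tight set of indices covers both elements,
but no set of the family it indexes contains both. Shifting `x` to `y` then destroys the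
surplus condition. -/
def IsSaturatedPair (t : ℕ) (A : ι → Finset α) (x y : α) : Prop :=
  ∃ J, IsTight t A J ∧ x ∈ J.biUnion A ∧ y ∈ J.biUnion A ∧ ∀ i ∈ J, x ∈ A i → y ∉ A i

theorem HasSurplus.card_le_of_isSaturatedPair [Fintype ι] (hA : HasSurplus t A) {x : α}
    {Z : Finset α} (hZ : ∀ y ∈ Z, IsSaturatedPair t A x y) : #Z ≤ #{i | x ∉ A i} := by
  classical
  set T : Finset ι := {i | x ∈ A i}
  have mem_T : ∀ {i}, i ∈ T ↔ x ∈ A i := by simp [T]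
  set s : Finset (Finset ι) := {J | IsTight t A J ∧ x ∈ J.biUnion A}
  have mem_s : ∀ {J}, J ∈ s ↔ IsTight t A J ∧ x ∈ J.biUnion A := by simp [s]
  have cover : Z ⊆ s.biUnion fun J => J.biUnion A \ (J ∩ T).biUnion A := by
    intro y hy
    obtain ⟨J, hJ, hxJ, hyJ, hdisj⟩ := hZ y hy
    refine mem_biUnion.2 ⟨J, mem_s.2 ⟨hJ, hxJ⟩, mem_sdiff.2 ⟨hyJ, fun h => ?_⟩⟩
    obtain ⟨i, hi, hyi⟩ := mem_biUnion.1 h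
    exact hdisj i (mem_inter.1 hi).1 (mem_T.1 (mem_inter.1 hi).2) hyi
  have hmeet : ∀ J ∈ s, (J ∩ T).Nonempty := by
    intro J hJ
    obtain ⟨i, hi, hxi⟩ := mem_biUnion.1 (mem_s.1 hJ).2
    exact ⟨i, mem_inter.2 ⟨hi, mem_T.2 hxi⟩⟩
  have hinter : ∀ J ∈ s, ∀ J' ∈ s, (J ∩ J').Nonempty → J ∩ J' ∈ s := by
    intro J hJ J' hJ' hne
    obtain ⟨htight, hx⟩ := mem_s.1 hJ
    obtain ⟨htight', hx'⟩ := mem_s.1 hJ'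
    refine mem_s.2 ⟨htight.inter htight' hA hne, ?_⟩
    exact htight.biUnion_inter htight' hA hne ▸ mem_inter.2 ⟨hx, hx'⟩
  calc #Z ≤ #(s.biUnion fun J => J.biUnion A \ (J ∩ T).biUnion A) := card_le_card cover
    _ ≤ #(s.biUnion id \ T) :=
        hA.card_biUnion_sdiff_le T s (fun J hJ => (mem_s.1 hJ).1) hmeet hinter
    _ ≤ #{i | x ∉ A i} := card_le_card fun i hi => by
        simpa [T] using (mem_sdiff.1 hi).2

theorem isExclusivePair_of_card_le [Fintype ι] {x y : α} {j : ι}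
    (hcard : #{i | y ∈ A i} ≤ #{i | x ∈ A i}) (hy : y ∈ A j) (hx : x ∉ A j) :
    IsExclusivePair A x y := by
  refine ⟨?_, j, hy, hx⟩
  by_contra! hxy
  refine hcard.not_gt (card_lt_card (ssubset_iff_of_subset ?_ |>.2 ⟨j, ?_, ?_⟩))
  · exact monotone_filter_right _ fun i _ => hxy i
  · simpa using hy
  · simpa using hx

theorem HasSurplus.exists_forall_mem [Finite ι] [Nonempty ι] (hA : HasSurplus t A) (ht : 1 ≤ t)
    (hsat : ∀ x y, IsExclusivePair A x y → IsSaturatedPair t A x y) : ∃ x, ∀ i, x ∈ A i := by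
  classical
  cases nonempty_fintype ι
  have hne : (univ.biUnion A).Nonempty :=
    card_pos.1 ((Nat.add_pos_right _ ht).trans_le (hA univ univ_nonempty))
  obtain ⟨x, -, hmax⟩ := exists_max_image _ (fun x => #{i | x ∈ A i}) hne
  refine ⟨x, ?_⟩
  by_contra! hx
  have hcompl : ({i | x ∉ A i} : Finset ι).Nonempty := by simpa [filter_nonempty_iff] using hx
  have hle : #(({i | x ∉ A i} : Finset ι).biUnion A) ≤ #{i | x ∉ A i} := by
    refine hA.card_le_of_isSaturatedPair fun y hy => hsat x y ?_
    obtain ⟨j, hj, hyj⟩ := mem_biUnion.1 hy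
    exact isExclusivePair_of_card_le (hmax y (mem_biUnion.2 ⟨j, mem_univ j, hyj⟩)) hyj
      (mem_filter.1 hj).2
  have := hA _ hcompl
  omega

theorem biUnion_sdiff_const (I : Finset ι) (A : ι → Finset α) (K : Finset α) :
    (I.biUnion fun i => A i \ K) = I.biUnion A \ K := by
  ext z
  simp only [mem_biUnion, mem_sdiff]
  tauto

theorem HasSurplus.sdiff_const {K : Finset α} (hA : HasSurplus t A) (hK : #K ≤ t) :
    HasSurplus (t - #K) fun i => A i \ K := by
  intro I hI
  have hsurplus := hA I hI
  have hcard := le_card_sdiff K (I.biUnion A)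
  rw [biUnion_sdiff_const]
  omega

theorem IsExclusivePair.of_sdiff_const {K : Finset α} {x y : α}
    (hxy : IsExclusivePair (fun i => A i \ K) x y) : IsExclusivePair A x y ∧ x ∉ K ∧ y ∉ K := by
  obtain ⟨⟨p, hxp, hyp⟩, q, hyq, hxq⟩ := hxy
  simp only [mem_sdiff] at hxp hyp hyq hxq
  exact ⟨⟨⟨p, by tauto⟩, q, by tauto⟩, hxp.2, hyq.2⟩

theorem IsSaturatedPair.sdiff_const {K : Finset α} {x y : α} (hxy : IsSaturatedPair t A x y)
    (hKA : ∀ i, K ⊆ A i) (hK : #K ≤ t) (hx : x ∉ K) (hy : y ∉ K) :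
    IsSaturatedPair (t - #K) (fun i => A i \ K) x y := by
  obtain ⟨J, hJ, hxJ, hyJ, hdisj⟩ := hxy
  refine ⟨J, ?_, ?_, ?_, fun i hi hxi hyi => ?_⟩
  · obtain ⟨i, hi, -⟩ := mem_biUnion.1 hxJ
    have hsub : K ⊆ J.biUnion A := (hKA i).trans (subset_biUnion_of_mem A hi)
    rw [IsTight, biUnion_sdiff_const, card_sdiff_of_subset hsub, hJ, Nat.add_sub_assoc hK]
  · exact biUnion_sdiff_const J A K ▸ mem_sdiff.2 ⟨hxJ, hx⟩
  · exact biUnion_sdiff_const J A K ▸ mem_sdiff.2 ⟨hyJ, hy⟩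
  · exact hdisj i hi (mem_sdiff.1 hxi).1 (mem_sdiff.1 hyi).1

theorem HasSurplus.exists_card_eq_forall_subset [Finite ι] [Nonempty ι] (hA : HasSurplus t A)
    (hsat : ∀ x y, IsExclusivePair A x y → IsSaturatedPair t A x y) :
    ∃ K, #K = t ∧ ∀ i, K ⊆ A i := by
  cases nonempty_fintype ι
  let C := {x ∈ univ.biUnion A | ∀ i, x ∈ A i}
  have hCA : ∀ i, C ⊆ A i := fun i x hx => (mem_filter.1 hx).2 i
  suffices hC : t ≤ #C by
    obtain ⟨K, hKC, hK⟩ := exists_subset_card_eq hC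
    exact ⟨K, hK, fun i => hKC.trans (hCA i)⟩
  by_contra! hC
  obtain ⟨x, hx⟩ := (hA.sdiff_const hC.le).exists_forall_mem (by omega) fun x y hxy =>
    have ⟨hxy, hx, hy⟩ := hxy.of_sdiff_const
    (hsat x y hxy).sdiff_const hCA hC.le hx hy
  simp only [mem_sdiff] at hx
  obtain ⟨i⟩ := ‹Nonempty ι›
  exact (hx i).2 (mem_filter.2 ⟨mem_biUnion.2 ⟨i, mem_univ i, (hx i).1⟩, fun j => (hx j).1⟩)

section Shift

/-! ### Shifting -/

/-- The modified family `F_y^x` of `swapFam`, for arbitrary index and element types: `x` is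
replaced by `y` in every set that contains `x` but not `y`. -/
def shift (A : ι → Finset α) (x y : α) (i : ι) : Finset α :=
  if x ∈ A i ∧ y ∉ A i then insert y ((A i).erase x) else A i

variable {x y : α}

theorem mem_shift_left (i : ι) : x ∈ shift A x y i ↔ x ∈ A i ∧ y ∈ A i := by
  grind [shift]

theorem mem_shift_right (i : ι) : y ∈ shift A x y i ↔ x ∈ A i ∨ y ∈ A i := by
  grind [shift]

theorem mem_shift_of_ne {z : α} (hx : z ≠ x) (hy : z ≠ y) (i : ι) :
    z ∈ shift A x y i ↔ z ∈ A i := by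
  grind [shift]

theorem biUnion_erase_subset_biUnion_shift (I : Finset ι) :
    (I.biUnion A).erase x ⊆ I.biUnion (shift A x y) := by
  intro z hz
  obtain ⟨hzx, hz⟩ := mem_erase.1 hz
  obtain ⟨i, hi, hzi⟩ := mem_biUnion.1 hz
  refine mem_biUnion.2 ⟨i, hi, ?_⟩
  by_cases hzy : z = y
  · subst hzy; exact (mem_shift_right i).2 (Or.inr hzi)
  · exact (mem_shift_of_ne hzx hzy i).2 hzi

theorem hasSurplus_shift (hA : HasSurplus t A) (hsat : ¬ IsSaturatedPair t A x y) :
    HasSurplus t (shift A x y) := by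
  intro I hI
  have herase := biUnion_erase_subset_biUnion_shift (A := A) (x := x) (y := y) I
  have hcard := card_le_card herase
  rcases (hA I hI).eq_or_lt with hI_tight | hlt
  swap
  · have := pred_card_le_card_erase (s := I.biUnion A) (a := x)
    omega
  by_cases hxI : x ∈ I.biUnion A
  swap
  · rwa [erase_eq_of_notMem hxI, ← hI_tight] at hcard
  obtain ⟨j, hj, hxj⟩ := mem_biUnion.1 hxI
  by_cases hyI : y ∈ I.biUnion A
  · obtain ⟨i, hi, hxi, hyi⟩ : ∃ i ∈ I, x ∈ A i ∧ y ∈ A i := by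
      by_contra! h
      exact hsat ⟨I, hI_tight.symm, hxI, hyI, h⟩
    have hx : x ∈ I.biUnion (shift A x y) :=
      mem_biUnion.2 ⟨i, hi, (mem_shift_left i).2 ⟨hxi, hyi⟩⟩
    rw [hI_tight, ← insert_erase hxI]
    exact card_le_card (insert_subset hx herase)
  · have hy : y ∈ I.biUnion (shift A x y) :=
      mem_biUnion.2 ⟨j, hj, (mem_shift_right j).2 (Or.inl hxj)⟩
    have := card_le_card (insert_subset hy herase)
    rwa [card_insert_of_notMem (fun h => hyI (mem_of_mem_erase h)), card_erase_add_one hxI,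
      ← hI_tight] at this

end Shift

section SDR

/-! ### Systems of distinct representatives -/

variable [Fintype ι] [DecidableEq ι]

/-- The systems of distinct representatives of a family, as choice functions; `numSDR` counts
them for families indexed by `Fin n`. -/
def sdrs (A : ι → Finset α) : Finset (ι → α) :=
  {f ∈ Fintype.piFinset A | Function.Injective f}

theorem mem_sdrs {f : ι → α} : f ∈ sdrs A ↔ (∀ i, f i ∈ A i) ∧ Function.Injective f := by
  simp [sdrs]

theorem HasSurplus.exists_mem_sdrs_forall_eq (hA : HasSurplus t A) {P : Finset ι} (hP : #P ≤ t)
    {g : ι → α} (hg : Set.InjOn g P) (hgA : ∀ i ∈ P, g i ∈ A i) :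
    ∃ f ∈ sdrs A, ∀ i ∈ P, f i = g i := by
  let B : ι → Finset α := fun i => if i ∈ P then {g i} else A i \ P.image g
  have hall : ∀ I : Finset ι, #I ≤ #(I.biUnion B) := by
    intro I
    have houter : #(I \ P) ≤ #((I \ P).biUnion A \ P.image g) := by
      rcases (I \ P).eq_empty_or_nonempty with h | h
      · simp [h]
      · have := hA _ h
        have := le_card_sdiff (P.image g) ((I \ P).biUnion A)
        have := card_image_le (s := P) (f := g)
        omega
    calc #I = #(I ∩ P) + #(I \ P) := (card_inter_add_card_sdiff I P).symm
      _ ≤ #((I ∩ P).image g) + #((I \ P).biUnion A \ P.image g) := by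
        rw [card_image_of_injOn (hg.mono (coe_subset.2 inter_subset_right))]
        exact Nat.add_le_add_left houter _
      _ = #((I ∩ P).image g ∪ ((I \ P).biUnion A \ P.image g)) :=
        (card_union_of_disjoint (disjoint_sdiff.mono_left
          (image_subset_image inter_subset_right))).symm
      _ ≤ #(I.biUnion B) := card_le_card fun z hz => by
        simp only [mem_union, mem_image, mem_inter, mem_sdiff, mem_biUnion] at hz
        rcases hz with ⟨i, ⟨hiI, hiP⟩, rfl⟩ | ⟨⟨i, ⟨hiI, hiP⟩, hzi⟩, hzP⟩
        · exact mem_biUnion.2 ⟨i, hiI, by simp [B, hiP]⟩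
        · exact mem_biUnion.2 ⟨i, hiI, by simpa [B, hiP, hzi] using hzP⟩
  obtain ⟨f, hf, hfB⟩ := (Finset.all_card_le_biUnion_card_iff_exists_injective B).1 hall
  have hfP : ∀ i ∈ P, f i = g i := fun i hi => by simpa [B, hi] using hfB i
  refine ⟨f, mem_sdrs.2 ⟨fun i => ?_, hf⟩, hfP⟩
  by_cases hi : i ∈ P
  · exact hfP i hi ▸ hgA i hi
  · have := hfB i
    simp only [B, hi, if_false, mem_sdiff] at this
    exact this.1

theorem swap_comp_mem_sdrs_sdiff {x y : α} {f : ι → α}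
    (hf : f ∈ sdrs (shift A x y) \ sdrs A) :
    Equiv.swap x y ∘ f ∈ sdrs A \ sdrs (shift A x y) := by
  obtain ⟨hf', hfA⟩ := mem_sdiff.1 hf
  obtain ⟨hfA', hinj⟩ := mem_sdrs.1 hf'
  obtain ⟨i, hi⟩ : ∃ i, f i ∉ A i := by
    by_contra! h
    exact hfA (mem_sdrs.2 ⟨h, hinj⟩)
  obtain ⟨hfi, hxi, hyi⟩ : f i = y ∧ x ∈ A i ∧ y ∉ A i := by
    have := hfA' i
    grind [shift]
  have hσi : Equiv.swap x y (f i) = x := by rw [hfi, Equiv.swap_apply_right]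
  refine mem_sdiff.2 ⟨mem_sdrs.2 ⟨fun k => ?_, (Equiv.swap x y).injective.comp hinj⟩, fun h => ?_⟩
  · rw [Function.comp_apply]
    by_cases hki : k = i
    · rwa [hki, hσi]
    have hky : f k ≠ y := fun h => hki (hinj (h.trans hfi.symm))
    by_cases hkx : f k = x
    · rw [hkx, Equiv.swap_apply_left]
      exact (mem_shift_left k |>.1 (hkx ▸ hfA' k)).2
    · rw [Equiv.swap_apply_of_ne_of_ne hkx hky]
      exact (mem_shift_of_ne hkx hky k).1 (hfA' k)
  · have hi' := (mem_sdrs.1 h).1 i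
    rw [Function.comp_apply, hσi] at hi'
    exact hyi (mem_shift_left i |>.1 hi').2

theorem HasSurplus.card_sdrs_shift_lt (hA : HasSurplus t A) (ht : 2 ≤ t) {x y : α}
    (hxy : IsExclusivePair A x y) : #(sdrs (shift A x y)) < #(sdrs A) := by
  obtain ⟨p, hxp, hyp⟩ := hxy.1
  obtain ⟨q, hyq, hxq⟩ := hxy.2
  have hpq : p ≠ q := fun h => hxq (h ▸ hxp)
  obtain ⟨h, hh, hhpq⟩ := hA.exists_mem_sdrs_forall_eq (P := {p, q})
    (g := Function.update (fun _ => y) p x) (card_le_two.trans ht)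
    (by simp [Set.injOn_pair, hpq, Function.update_of_ne hpq.symm, hxy.ne])
    (by simp [Function.update_of_ne hpq.symm, hxp, hyq])
  have hhp : h p = x := by simpa using hhpq p (by simp)
  have hhq : h q = y := by simpa [hpq.symm] using hhpq q (by simp)
  have hh' : h ∉ sdrs (shift A x y) := fun h' =>
    hyp (mem_shift_left p |>.1 (hhp ▸ (mem_sdrs.1 h').1 p)).2
  have hmissed : h ∉ (sdrs (shift A x y) \ sdrs A).image (Equiv.swap x y ∘ ·) := fun hmem => by
    obtain ⟨f, hf, hfh⟩ := mem_image.1 hmem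
    have hfq : f q = x := (Equiv.swap x y).injective <| by
      rw [Equiv.swap_apply_left]
      exact (congrFun hfh q).trans hhq
    have hq := (mem_sdrs.1 (mem_sdiff.1 hf).1).1 q
    exact hxq (mem_shift_left q |>.1 (hfq ▸ hq)).1
  rw [← card_sdiff_lt_card_sdiff_iff]
  calc #(sdrs (shift A x y) \ sdrs A)
      = #((sdrs (shift A x y) \ sdrs A).image (Equiv.swap x y ∘ ·)) :=
        (card_image_of_injective _ (Equiv.swap x y).injective.comp_left).symm
    _ < #(sdrs A \ sdrs (shift A x y)) :=
        card_lt_card (ssubset_iff_of_subset (image_subset_iff.2 fun f => swap_comp_mem_sdrs_sdiff)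
          |>.2 ⟨h, mem_sdiff.2 ⟨hh, hh'⟩, hmissed⟩)

theorem HasSurplus.card_sdrs_lt_of_lt (hA : HasSurplus t A) (ht : 1 ≤ t) {B : ι → Finset α}
    (hBA : B < A) : #(sdrs B) < #(sdrs A) := by
  obtain ⟨hle, i, hi⟩ := Pi.lt_def.1 hBA
  obtain ⟨x, hxA, hxB⟩ := exists_of_ssubset hi
  obtain ⟨f, hf, hfi⟩ := hA.exists_mem_sdrs_forall_eq (P := {i}) (g := fun _ => x)
    (by simpa using ht) (by simp) (by simpa using hxA)
  have hfx : f i = x := hfi i (mem_singleton_self i)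
  refine card_lt_card (ssubset_iff_of_subset (fun h hh => ?_) |>.2 ⟨f, hf, fun hfB => ?_⟩)
  · exact mem_sdrs.2 ⟨fun j => hle j ((mem_sdrs.1 hh).1 j), (mem_sdrs.1 hh).2⟩
  · exact hxB (hfx ▸ (mem_sdrs.1 hfB).1 i)

end SDR

section Sunflower

/-! ### Sunflowers with one private element in each set -/

/-- The families obtained from `F*` by relabelling: a kernel `K` of `t` elements lying in every
set, and one private element `g i` in each set. -/
def IsUnitSunflower (t : ℕ) (A : ι → Finset α) : Prop :=
  ∃ (K : Finset α) (g : ι → α),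
    #K = t ∧ Function.Injective g ∧ (∀ i, g i ∉ K) ∧ A = fun i => insert (g i) K

theorem IsUnitSunflower.hasSurplus (hA : IsUnitSunflower t A) : HasSurplus t A := by
  classical
  obtain ⟨K, g, rfl, hg, hgK, rfl⟩ := hA
  intro I ⟨i, hi⟩
  have hsub : I.image g ∪ K ⊆ I.biUnion fun i => insert (g i) K := by
    refine union_subset (image_subset_iff.2 fun j hj => ?_) ?_
    · exact mem_biUnion.2 ⟨j, hj, mem_insert_self _ _⟩
    · exact (subset_insert _ _).trans (subset_biUnion_of_mem (fun i => insert (g i) K) hi)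
  have hdisj : Disjoint (I.image g) K := by
    simpa [disjoint_left] using fun j _ => hgK j
  calc #I + #K = #(I.image g ∪ K) := by
        rw [card_union_of_disjoint hdisj, card_image_of_injective I hg]
    _ ≤ _ := card_le_card hsub

theorem inter_subset_of_card_inter_eq {B C D : Finset α} (hB : #B = t + 1) (hC : #C = t + 1)
    (hD : #D = t + 1) (hBC : #(B ∩ C) = t) (hBD : #(B ∩ D) = t) (hCD : #(C ∩ D) = t)
    (hunion : t + 3 ≤ #(B ∪ C ∪ D)) : B ∩ C ⊆ D := by
  have hcard : #((B ∪ C) ∩ D) ≤ t := by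
    have := card_union_add_card_inter B C
    have := card_union_add_card_inter (B ∪ C) D
    omega
  have hB : B ∩ D = (B ∪ C) ∩ D :=
    eq_of_subset_of_card_le (inter_subset_inter_right subset_union_left) (hcard.trans hBD.ge)
  have hC : C ∩ D = (B ∪ C) ∩ D :=
    eq_of_subset_of_card_le (inter_subset_inter_right subset_union_right) (hcard.trans hCD.ge)
  have hsub : B ∩ D ⊆ B ∩ C :=
    subset_inter inter_subset_left ((hB.trans hC.symm).subset.trans inter_subset_left)
  rw [← eq_of_subset_of_card_le hsub (hBC.trans hBD.symm).le]
  exact inter_subset_right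

theorem HasSurplus.exists_kernel_of_card_inter_eq [Nonempty ι] (hA : HasSurplus t A)
    (hcard : ∀ i, #(A i) = t + 1) (hinter : ∀ i j, i ≠ j → #(A i ∩ A j) = t) :
    ∃ K, #K = t ∧ ∀ i, K ⊆ A i := by
  rcases subsingleton_or_nontrivial ι with hι | hι
  · obtain ⟨i⟩ := ‹Nonempty ι›
    obtain ⟨K, hK, hKt⟩ := exists_subset_card_eq (s := A i) (n := t) (by rw [hcard]; omega)
    exact ⟨K, hKt, fun j => Subsingleton.elim i j ▸ hK⟩
  · classical
    obtain ⟨i, j, hij⟩ := exists_pair_ne ι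
    refine ⟨A i ∩ A j, hinter i j hij, fun k => ?_⟩
    rcases eq_or_ne i k with rfl | hik
    · exact inter_subset_left
    rcases eq_or_ne j k with rfl | hjk
    · exact inter_subset_right
    refine inter_subset_of_card_inter_eq (hcard i) (hcard j) (hcard k) (hinter i j hij)
      (hinter i k hik) (hinter j k hjk) ?_
    have hsurplus := hA {i, j, k} (insert_nonempty _ _)
    rwa [card_eq_three.2 ⟨i, j, k, hij, hik, hjk, rfl⟩, add_comm, biUnion_insert, biUnion_insert,
      singleton_biUnion, ← union_assoc] at hsurplus

theorem HasSurplus.isUnitSunflower_iff [Nonempty ι] (hA : HasSurplus t A) :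
    IsUnitSunflower t A ↔ (∀ i, #(A i) = t + 1) ∧ ∀ i j, i ≠ j → #(A i ∩ A j) = t := by
  constructor
  · rintro ⟨K, g, rfl, hg, hgK, rfl⟩
    refine ⟨fun i => card_insert_of_notMem (hgK i), fun i j hij => ?_⟩
    congr 1
    ext z
    have := hg.ne hij
    grind
  · rintro ⟨hcard, hinter⟩
    obtain ⟨K, hK, hKA⟩ := hA.exists_kernel_of_card_inter_eq hcard hinter
    choose g hgK hgA using fun i => exists_eq_insert_iff.2 ⟨hKA i, hK.symm ▸ (hcard i).symm⟩
    refine ⟨K, g, hK, fun i j hij => ?_, hgK, funext fun i => (hgA i).symm⟩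
    by_contra hne
    have hAij : A i = A j := by rw [← hgA i, ← hgA j, hij]
    have := hinter i j hne
    rw [hAij, inter_self, hcard] at this
    omega

variable [Fintype ι] [DecidableEq ι]

theorem card_sdrs_insert_filter_eq {K : Finset α} {g : ι → α} (hg : Function.Injective g)
    (hgK : ∀ i, g i ∉ K) (I : Finset ι) :
    #{f ∈ sdrs fun i => insert (g i) K | ({i | f i ∈ K} : Finset ι) = I} =
      (#K).descFactorial #I := by
  let extend (e : I ↪ K) (i : ι) : α := if h : i ∈ I then e ⟨i, h⟩ else g i
  have extend_mem : ∀ e i, extend e i ∈ K ↔ i ∈ I := fun e i => by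
    by_cases h : i ∈ I <;> simp [extend, h, hgK]
  have extend_injective : ∀ e, Function.Injective (extend e) := by
    intro e i j hij
    have hmem : i ∈ I ↔ j ∈ I := by rw [← extend_mem e, ← extend_mem e, hij]
    by_cases hi : i ∈ I
    · simpa [extend, hi, hmem.1 hi] using hij
    · exact hg (by simpa [extend, hi, mt hmem.2 hi] using hij)
  calc #{f ∈ sdrs fun i => insert (g i) K | ({i | f i ∈ K} : Finset ι) = I}
      = #(univ : Finset (I ↪ K)) := (card_bij (fun e _ => extend e) ?_ ?_ ?_).symm
    _ = (#K).descFactorial #I := by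
      rw [card_univ, Fintype.card_embedding_eq, Fintype.card_coe, Fintype.card_coe]
  · intro e _
    refine mem_filter.2 ⟨mem_sdrs.2 ⟨fun i => ?_, extend_injective e⟩, ?_⟩
    · by_cases h : i ∈ I <;> simp [extend, h]
    · simp only [extend_mem, filter_univ_mem]
  · intro e _ e' _ hee'
    ext i
    simpa [extend] using congrFun hee' i
  · intro f hf
    obtain ⟨hfS, rfl⟩ := mem_filter.1 hf
    obtain ⟨hfA, hinj⟩ := mem_sdrs.1 hfS
    refine ⟨⟨fun i => ⟨f i, (mem_filter.1 i.2).2⟩, fun i j hij => ?_⟩, mem_univ _, ?_⟩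
    · exact Subtype.ext (hinj (congrArg Subtype.val hij))
    · ext i
      by_cases h : f i ∈ K
      · exact dif_pos (mem_filter.2 ⟨mem_univ i, h⟩)
      · simpa [extend, h, eq_comm] using hfA i

theorem IsUnitSunflower.card_sdrs (hA : IsUnitSunflower t A) :
    #(sdrs A) = U t (Fintype.card ι) := by
  obtain ⟨K, g, rfl, hg, hgK, rfl⟩ := hA
  calc #(sdrs fun i => insert (g i) K)
      = ∑ I ∈ (univ : Finset ι).powerset,
          #{f ∈ sdrs fun i => insert (g i) K | ({i | f i ∈ K} : Finset ι) = I} :=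
        card_eq_sum_card_fiberwise fun f _ => by simp
    _ = ∑ I ∈ (univ : Finset ι).powerset, (#K).descFactorial #I :=
        sum_congr rfl fun I _ => card_sdrs_insert_filter_eq hg hgK I
    _ = ∑ j ∈ range (Fintype.card ι + 1),
          (#K).choose j * (Fintype.card ι).choose j * j.factorial := by
        rw [sum_powerset_apply_card, card_univ]
        refine sum_congr rfl fun j _ => ?_
        rw [Nat.descFactorial_eq_factorial_mul_choose, smul_eq_mul]
        ring
    _ = U (#K) (Fintype.card ι) := by
        refine sum_congr_of_eq_on_inter (fun j _ hj => ?_) (fun j _ hj => ?_) fun _ _ _ => rfl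
        · simp [Nat.choose_eq_zero_of_lt (show #K < j by simpa using hj)]
        · simp [Nat.choose_eq_zero_of_lt (show Fintype.card ι < j by simpa using hj)]

theorem isUnitSunflower_of_minimalFor [Nonempty ι] (ht : 2 ≤ t)
    (hA : MinimalFor (HasSurplus t) (fun A => #(sdrs A)) A) : IsUnitSunflower t A := by
  have hsat : ∀ x y, IsExclusivePair A x y → IsSaturatedPair t A x y := by
    intro x y hxy
    by_contra hunsat
    exact hA.not_lt (hasSurplus_shift hA.prop hunsat) (hA.prop.card_sdrs_shift_lt ht hxy)
  obtain ⟨K, rfl, hKA⟩ := hA.prop.exists_card_eq_forall_subset hsat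
  obtain ⟨g, hg, hgA⟩ := (Finset.all_card_le_biUnion_card_iff_exists_injective
    fun i => A i \ K).1 fun I => by
      rcases I.eq_empty_or_nonempty with rfl | hI
      · simp
      · exact (Nat.le_add_right _ _).trans (hA.prop.sdiff_const le_rfl I hI)
  simp only [mem_sdiff] at hgA
  have hsunflower : IsUnitSunflower #K fun i => insert (g i) K :=
    ⟨K, g, rfl, hg, fun i => (hgA i).2, rfl⟩
  have hle : (fun i => insert (g i) K) ≤ A := fun i => insert_subset (hgA i).1 (hKA i)
  rcases hle.eq_or_lt with heq | hlt
  · exact heq ▸ hsunflower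
  · exact absurd (hA.prop.card_sdrs_lt_of_lt (by omega) hlt) (hA.not_lt hsunflower.hasSurplus)

theorem HasSurplus.U_le_card_sdrs [Nonempty ι] (hA : HasSurplus t A) (ht : 2 ≤ t) :
    U t (Fintype.card ι) ≤ #(sdrs A) := by
  obtain ⟨B, hB⟩ := exists_minimalFor_of_wellFoundedLT (HasSurplus t)
    (fun A : ι → Finset α => #(sdrs A)) ⟨A, hA⟩
  rw [← (isUnitSunflower_of_minimalFor ht hB).card_sdrs]
  exact hB.le hA

theorem HasSurplus.card_sdrs_eq_iff [Nonempty ι] (hA : HasSurplus t A) (ht : 2 ≤ t) :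
    #(sdrs A) = U t (Fintype.card ι) ↔ IsUnitSunflower t A := by
  refine ⟨fun h => isUnitSunflower_of_minimalFor ht ⟨hA, fun B hB _ => ?_⟩,
    IsUnitSunflower.card_sdrs⟩
  exact h.trans_le (hB.U_le_card_sdrs ht)

end Sunflower

end GeneralFamilies

theorem equality_characterization_general {ι α : Type*} [Fintype ι] [DecidableEq ι]
    [DecidableEq α] {t : ℕ} (ht : 2 ≤ t) {A : ι → Finset α} (hA : HasSurplus t A) :
    #(sdrs A) = U t (Fintype.card ι) ↔
      (∀ i, #(A i) = t + 1) ∧ ∀ i j, i ≠ j → #(A i ∩ A j) = t := by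
  rcases isEmpty_or_nonempty ι with hι | hι
  · simp [sdrs, U, sum_range_succ', Function.injective_of_subsingleton]
  · exact (hA.card_sdrs_eq_iff ht).trans hA.isUnitSunflower_iff

theorem equality_characterization (t n : ℕ) (ht : 2 ≤ t) (hn : 1 ≤ n)
    (A : Fin n → Finset ℕ) (hA : IsTNFamily t A) :
    numSDR A = U t n ↔
      (∀ i, (A i).card = t + 1) ∧ ∀ i j, i ≠ j → (A i ∩ A j).card = t := by
  simpa [numSDR, sdrs] using equality_characterization_general ht hA
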